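/- arXiv:1911.02106 — 5 statements merged into one kernel-verified Lean document; each statement's English description precedes it below -/
import Mathlib

section
/- Let σ > 0 and let C₁ = 8 / log(1 + σ⁻²). Let T ≥ 1, let (β_t)_{1≤t≤T} be a nondecreasing sequence of nonnegative reals, and let (s_t)_{1≤t≤T} be reals with 0 ≤ s_t² ≤ 1 for all t. Let γ_T be any real with ∑_{t=1}^T (1/2)·log(1 + σ⁻²·s_t²) ≤ γ_T. Then ∑_{t=1}^T 4·β_t·s_t² ≤ β_T · γ_T · C₁. -/
/-!
By concavity of the logarithm, `x * log (1 + a) ≤ log (1 + a * x)` for `x ∈ [0, 1]` and `a ≥ 0`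
(`mul_log_one_add_le`). With `a = σ⁻²` and `x = s_t²` this gives
`4 * s_t² ≤ C₁ * ((1 / 2) * log (1 + σ⁻² * s_t²))`. Bounding each `β_t` by `β_T` and summing
over `t` turns the right-hand side into at most `β_T * C₁ * γ_T`.
-/

/-- Bernoulli's inequality `(1 + a) ^ x ≤ 1 + x * a` after taking logarithms. -/
lemma mul_log_one_add_le {a x : ℝ} (ha : 0 ≤ a) (hx0 : 0 ≤ x) (hx1 : x ≤ 1) :
    x * Real.log (1 + a) ≤ Real.log (1 + a * x) := by
  have hpos : 0 < 1 + a := by linarith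
  rw [← Real.log_rpow hpos, mul_comm a x]
  exact Real.log_le_log (Real.rpow_pos_of_pos hpos x)
    (rpow_one_add_le_one_add_mul_self (by linarith) hx0 hx1)

/-- Sum-of-variances bound (deterministic core of the SS-GPUCB Lemma on variance sums):
with `C₁ = 8 / log (1 + σ⁻²)`, nondecreasing nonnegative `β_t` and `0 ≤ s_t² ≤ 1`,
if `∑_{t=1}^T (1/2)·log(1 + σ⁻²·s_t²) ≤ γ_T` then `∑_{t=1}^T 4·β_t·s_t² ≤ β_T·γ_T·C₁`. -/
theorem stmt_1 (σ : ℝ) (hσ : 0 < σ) (C₁ : ℝ) (hC₁ : C₁ = 8 / Real.log (1 + σ⁻¹ ^ 2))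
    (T : ℕ) (hT : 1 ≤ T) (β s : ℕ → ℝ)
    (hβnn : ∀ t ∈ Finset.Icc 1 T, 0 ≤ β t)
    (hβmono : ∀ t ∈ Finset.Icc 1 T, ∀ t' ∈ Finset.Icc 1 T, t ≤ t' → β t ≤ β t')
    (hs : ∀ t ∈ Finset.Icc 1 T, 0 ≤ (s t) ^ 2 ∧ (s t) ^ 2 ≤ 1)
    (γT : ℝ)
    (hγ : ∑ t ∈ Finset.Icc 1 T, (1 / 2 : ℝ) * Real.log (1 + σ⁻¹ ^ 2 * (s t) ^ 2) ≤ γT) :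
    ∑ t ∈ Finset.Icc 1 T, 4 * β t * (s t) ^ 2 ≤ β T * γT * C₁ := by
  have hL : 0 < Real.log (1 + σ⁻¹ ^ 2) := Real.log_pos (by
    have : 0 < σ⁻¹ ^ 2 := by positivity
    linarith)
  have hTmem : T ∈ Finset.Icc 1 T := Finset.mem_Icc.mpr ⟨hT, le_rfl⟩
  have hβT : 0 ≤ β T := hβnn T hTmem
  have hC : 0 ≤ C₁ := by rw [hC₁]; positivity
  have hterm : ∀ t ∈ Finset.Icc 1 T, 4 * β t * (s t) ^ 2 ≤
      β T * C₁ * ((1 / 2 : ℝ) * Real.log (1 + σ⁻¹ ^ 2 * (s t) ^ 2)) := by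
    intro t ht
    have hβ : β t ≤ β T := hβmono t ht T hTmem (Finset.mem_Icc.mp ht).2
    have hlog : (s t) ^ 2 * Real.log (1 + σ⁻¹ ^ 2) ≤ Real.log (1 + σ⁻¹ ^ 2 * (s t) ^ 2) :=
      mul_log_one_add_le (by positivity) (hs t ht).1 (hs t ht).2
    calc 4 * β t * (s t) ^ 2 ≤ 4 * β T * (s t) ^ 2 := by gcongr
      _ = β T * C₁ * ((1 / 2 : ℝ) * ((s t) ^ 2 * Real.log (1 + σ⁻¹ ^ 2))) := by
        have hCL : C₁ * Real.log (1 + σ⁻¹ ^ 2) = 8 := by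
          rw [hC₁, div_mul_cancel₀ _ hL.ne']
        linear_combination (-(1 / 2) * β T * (s t) ^ 2) * hCL
      _ ≤ _ := by gcongr
  calc ∑ t ∈ Finset.Icc 1 T, 4 * β t * (s t) ^ 2
      ≤ ∑ t ∈ Finset.Icc 1 T,
          β T * C₁ * ((1 / 2 : ℝ) * Real.log (1 + σ⁻¹ ^ 2 * (s t) ^ 2)) :=
        Finset.sum_le_sum hterm
    _ = β T * C₁ * ∑ t ∈ Finset.Icc 1 T,
          (1 / 2 : ℝ) * Real.log (1 + σ⁻¹ ^ 2 * (s t) ^ 2) := by rw [Finset.mul_sum]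
    _ ≤ β T * C₁ * γT := by gcongr
    _ = β T * γT * C₁ := by ring
end

section
/- Let D be a finite set, f, μ, σ : D → ℝ with σ ≥ 0, β ≥ 0, and suppose |f(x) − μ(x)| ≤ β^{1/2}·σ(x) for all x ∈ D. Define α(x) = μ(x) + β^{1/2}·σ(x). Let Θ be a set, for each θ ∈ Θ let π(·|θ) be a probability mass function on D, let θ* ∈ Θ maximize θ ↦ ∑_{x∈D} f(x)·π(x|θ), and let θ_t ∈ Θ maximize θ ↦ ∑_{x∈D} α(x)·π(x|θ). Then the expected regret r_π(θ_t) = ∑_{x∈D} f(x)·π(x|θ*) − ∑_{x∈D} f(x)·π(x|θ_t) satisfies r_π(θ_t) ≤ 2·β^{1/2}·∑_{x∈D} σ(x)·π(x|θ_t). -/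
/-!
The confidence bound says `f ≤ α ≤ f + 2√β σ` pointwise. Averaging the left inequality over
`π θstar`, using that `θt` maximizes the expected value of `α`, and averaging the right
inequality over `π θt` gives `E_θstar f ≤ E_θstar α ≤ E_θt α ≤ E_θt f + 2√β E_θt σ`.
-/

/-- Per-iteration expected-regret bound for SS-GPUCB with discrete sampling
distributions: `r_π(θ_t) ≤ 2·√β·E_{π(θ_t)}[σ(x)]`. -/
theorem stmt_5 {D : Type*} [Fintype D] (f μ σ : D → ℝ) (β : ℝ)
    (hσ : ∀ x, 0 ≤ σ x) (hβ : 0 ≤ β)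
    (hconf : ∀ x, |f x - μ x| ≤ Real.sqrt β * σ x)
    (α : D → ℝ) (hα : ∀ x, α x = μ x + Real.sqrt β * σ x)
    {Θ : Type*} (π : Θ → D → ℝ)
    (hπnn : ∀ θ x, 0 ≤ π θ x) (hπsum : ∀ θ, ∑ x, π θ x = 1)
    (θstar θt : Θ)
    (hθstar : ∀ θ, ∑ x, f x * π θ x ≤ ∑ x, f x * π θstar x)
    (hθt : ∀ θ, ∑ x, α x * π θ x ≤ ∑ x, α x * π θt x) :
    (∑ x, f x * π θstar x) - (∑ x, f x * π θt x)
      ≤ 2 * Real.sqrt β * ∑ x, σ x * π θt x := by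
  -- Optimism: `f ≤ α` pointwise, so the optimal value of `f` is at most that of `α`.
  have h1 : ∑ x, f x * π θstar x ≤ ∑ x, α x * π θstar x := by
    refine Finset.sum_le_sum fun x _ => mul_le_mul_of_nonneg_right ?_ (hπnn _ x)
    have := (abs_le.mp (hconf x)).2
    rw [hα]; linarith
  -- The lower confidence bound gives `α ≤ f + 2√β σ` pointwise.
  have h2 : ∑ x, α x * π θt x
      ≤ ∑ x, (f x * π θt x + 2 * Real.sqrt β * (σ x * π θt x)) := by
    refine Finset.sum_le_sum fun x _ => ?_
    have h : α x ≤ f x + 2 * Real.sqrt β * σ x := by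
      have := (abs_le.mp (hconf x)).1
      rw [hα]; linarith
    have := mul_le_mul_of_nonneg_right h (hπnn θt x)
    linarith
  rw [Finset.sum_add_distrib, ← Finset.mul_sum] at h2
  linarith [hθt θstar]
end

section
/- Let D be a finite set, σ > 0, C₁ = 8/log(1 + σ⁻²), and T ≥ 1. Let (β_t)_{1≤t≤T} be nondecreasing nonnegative reals. For each t let σ_{t−1} : D → ℝ satisfy 0 ≤ σ_{t−1}(x)² ≤ 1 for all x, and let p_t : D → ℝ be a probability mass function with p_t(x) ≤ π* for all x. Let γ_T ≥ 0 be a real with ∑_{t=1}^T (1/2)·log(1 + σ⁻²·σ_{t−1}(x)²) ≤ γ_T for every x ∈ D. Let (r_t)_{1≤t≤T} be reals with 0 ≤ r_t ≤ 2·β_t^{1/2}·∑_{x∈D} σ_{t−1}(x)·p_t(x) for each t. Then the cumulative expected regret R_T = ∑_{t=1}^T r_t satisfies R_T ≤ √(T·C₁·β_T·γ_T·|D|·π*). -/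
/-!
By Cauchy–Schwarz, `R_T² ≤ T · ∑ r_t²`. Jensen's inequality for the probability weights `p_t`
gives `(∑ₓ σ_{t-1}(x) p_t(x))² ≤ ∑ₓ σ_{t-1}(x)² p_t(x) ≤ π* ∑ₓ σ_{t-1}(x)²`, hence
`r_t² ≤ 4 β_T π* ∑ₓ σ_{t-1}(x)²`. Finally, concavity of the logarithm on `[0, 1]`
(`mul_log_le_log_one_add_mul`) bounds `∑ₜ σ_{t-1}(x)²` by `2 γ_T / log (1 + σ⁻²)` for each of the
`|D|` points `x`.
-/

/-- Concavity of `s ↦ log (1 + a s)` on `[0, 1]`, as the logarithm of Bernoulli's inequality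
`(1 + a) ^ s ≤ 1 + s a`. -/
lemma mul_log_le_log_one_add_mul {a s : ℝ} (ha : 0 < a) (hs0 : 0 ≤ s) (hs1 : s ≤ 1) :
    s * Real.log (1 + a) ≤ Real.log (1 + a * s) := by
  have h := rpow_one_add_le_one_add_mul_self (by linarith : -1 ≤ a) hs0 hs1
  have hlog := Real.log_le_log (by positivity) h
  rwa [Real.log_rpow (by positivity), mul_comm s a] at hlog

/-- Cumulative expected regret bound in the discrete SS-GPUCB theorem:
`R_T = ∑_{t=1}^T r_t ≤ √(T·C₁·β_T·γ_T·|D|·π*)`. -/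
theorem stmt_7 {D : Type*} [Fintype D] (σ : ℝ) (hσ : 0 < σ)
    (C₁ : ℝ) (hC₁ : C₁ = 8 / Real.log (1 + σ⁻¹ ^ 2))
    (T : ℕ) (hT : 1 ≤ T) (β : ℕ → ℝ)
    (hβnn : ∀ t ∈ Finset.Icc 1 T, 0 ≤ β t)
    (hβmono : ∀ t ∈ Finset.Icc 1 T, ∀ t' ∈ Finset.Icc 1 T, t ≤ t' → β t ≤ β t')
    (σprev : ℕ → D → ℝ)
    (hσprev : ∀ t ∈ Finset.Icc 1 T, ∀ x, 0 ≤ (σprev t x) ^ 2 ∧ (σprev t x) ^ 2 ≤ 1)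
    (p : ℕ → D → ℝ) (πstar : ℝ)
    (hpnn : ∀ t ∈ Finset.Icc 1 T, ∀ x, 0 ≤ p t x)
    (hpsum : ∀ t ∈ Finset.Icc 1 T, ∑ x, p t x = 1)
    (hpbd : ∀ t ∈ Finset.Icc 1 T, ∀ x, p t x ≤ πstar)
    (γT : ℝ) (hγnn : 0 ≤ γT)
    (hγ : ∀ x, ∑ t ∈ Finset.Icc 1 T,
      (1 / 2 : ℝ) * Real.log (1 + σ⁻¹ ^ 2 * (σprev t x) ^ 2) ≤ γT)
    (r : ℕ → ℝ)
    (hrnn : ∀ t ∈ Finset.Icc 1 T, 0 ≤ r t)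
    (hr : ∀ t ∈ Finset.Icc 1 T, r t ≤ 2 * Real.sqrt (β t) * ∑ x, σprev t x * p t x) :
    ∑ t ∈ Finset.Icc 1 T, r t
      ≤ Real.sqrt (T * C₁ * β T * γT * (Fintype.card D) * πstar) := by
  have hTmem : T ∈ Finset.Icc 1 T := Finset.mem_Icc.mpr ⟨hT, le_rfl⟩
  have hβT : 0 ≤ β T := hβnn T hTmem
  have ha : 0 < σ⁻¹ ^ 2 := by positivity
  have hL : 0 < Real.log (1 + σ⁻¹ ^ 2) := Real.log_pos (by linarith)
  -- `p_T` sums to one, so `D` is nonempty and `π*` dominates some nonnegative mass.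
  have hπ : 0 ≤ πstar := by
    rcases isEmpty_or_nonempty D with hD | ⟨⟨x⟩⟩
    · have h := hpsum T hTmem
      simp at h
    · exact (hpnn T hTmem x).trans (hpbd T hTmem x)
  have hvar : ∀ x, ∑ t ∈ Finset.Icc 1 T, (σprev t x) ^ 2
      ≤ 2 * γT / Real.log (1 + σ⁻¹ ^ 2) := by
    intro x
    rw [le_div_iff₀ hL, Finset.sum_mul]
    have h1 : ∑ t ∈ Finset.Icc 1 T, (σprev t x) ^ 2 * Real.log (1 + σ⁻¹ ^ 2)
        ≤ ∑ t ∈ Finset.Icc 1 T, Real.log (1 + σ⁻¹ ^ 2 * (σprev t x) ^ 2) :=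
      Finset.sum_le_sum fun t ht =>
        mul_log_le_log_one_add_mul ha (hσprev t ht x).1 (hσprev t ht x).2
    have h2 := hγ x
    rw [← Finset.mul_sum] at h2
    linarith
  have hrsq : ∀ t ∈ Finset.Icc 1 T,
      (r t) ^ 2 ≤ 4 * β T * πstar * ∑ x, (σprev t x) ^ 2 := by
    intro t ht
    have hjensen : (∑ x, p t x * σprev t x) ^ 2 ≤ ∑ x, p t x * (σprev t x) ^ 2 :=
      Real.pow_arith_mean_le_arith_mean_pow_of_even Finset.univ (p t) (σprev t)
        (fun x _ => hpnn t ht x) (hpsum t ht) even_two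
    calc (r t) ^ 2 ≤ (2 * Real.sqrt (β t) * ∑ x, σprev t x * p t x) ^ 2 :=
          pow_le_pow_left₀ (hrnn t ht) (hr t ht) 2
      _ = 4 * β t * (∑ x, p t x * σprev t x) ^ 2 := by
          rw [mul_pow, mul_pow, Real.sq_sqrt (hβnn t ht)]
          simp only [mul_comm (σprev t _)]
          norm_num
      _ ≤ 4 * β T * (∑ x, πstar * (σprev t x) ^ 2) := by
          have hβ := hβmono t ht T hTmem (Finset.mem_Icc.mp ht).2
          have hpπ : ∑ x, p t x * (σprev t x) ^ 2 ≤ ∑ x, πstar * (σprev t x) ^ 2 :=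
            Finset.sum_le_sum fun x _ =>
              mul_le_mul_of_nonneg_right (hpbd t ht x) (sq_nonneg _)
          exact mul_le_mul (by linarith) (hjensen.trans hpπ) (sq_nonneg _) (by linarith)
      _ = 4 * β T * πstar * ∑ x, (σprev t x) ^ 2 := by
          rw [← Finset.mul_sum]; ring
  apply Real.le_sqrt_of_sq_le
  calc (∑ t ∈ Finset.Icc 1 T, r t) ^ 2 ≤ T * ∑ t ∈ Finset.Icc 1 T, (r t) ^ 2 := by
        simpa using sq_sum_le_card_mul_sum_sq (s := Finset.Icc 1 T) (f := r)
    _ ≤ T * ∑ t ∈ Finset.Icc 1 T, 4 * β T * πstar * ∑ x, (σprev t x) ^ 2 :=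
        mul_le_mul_of_nonneg_left (Finset.sum_le_sum hrsq) (Nat.cast_nonneg T)
    _ = T * (4 * β T * πstar * ∑ x, ∑ t ∈ Finset.Icc 1 T, (σprev t x) ^ 2) := by
        rw [← Finset.mul_sum, Finset.sum_comm]
    _ ≤ T * (4 * β T * πstar * ∑ _x : D, 2 * γT / Real.log (1 + σ⁻¹ ^ 2)) := by
        have hsum := Finset.sum_le_sum fun x (_ : x ∈ (Finset.univ : Finset D)) => hvar x
        exact mul_le_mul_of_nonneg_left
          (mul_le_mul_of_nonneg_left hsum (by positivity)) (Nat.cast_nonneg T)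
    _ = T * C₁ * β T * γT * (Fintype.card D) * πstar := by
        rw [hC₁, Finset.sum_const, Finset.card_univ, nsmul_eq_mul]
        ring
end

section
/- Let (Ω, μ) be a measure space with μ(Ω) finite, let f, m, s : Ω → ℝ be measurable with s ≥ 0, let β ≥ 0, t ≥ 1, and suppose |f(x) − m(x)| ≤ β^{1/2}·s(x) + 1/t² for all x ∈ Ω. Define α(x) = m(x) + β^{1/2}·s(x). Let Θ be a set and for each θ ∈ Θ let p(·|θ) be a probability density with respect to μ (nonnegative, integrating to 1), with f·p(·|θ), m·p(·|θ), s·p(·|θ) integrable. Let θ* maximize θ ↦ ∫ f·p(·|θ) dμ and let θ_t satisfy ∫ α·p(·|θ) dμ ≤ ∫ α·p(·|θ_t) dμ for all θ ∈ Θ. Then r_π(θ_t) = ∫ f·p(·|θ*) dμ − ∫ f·p(·|θ_t) dμ ≤ 2/t² + ∫ 2·β^{1/2}·s·p(·|θ_t) dμ. -/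
open MeasureTheory

/-!
Optimism argument: the confidence bound gives `f ≤ α + 1 / t ^ 2` and
`α ≤ f + 2 * √β * s + 1 / t ^ 2` pointwise. Integrating the first against `p θstar`, the second
against `p θt`, and linking the two through the maximality of `θt` for the expected acquisition
yields the bound.
-/

/-- Per-iteration expected-regret bound in the continuous-distribution SS-GPUCB proof:
`r_π(θ_t) ≤ 2/t² + ∫ 2·√β·s·p(·|θ_t) dμ`. -/
theorem stmt_10 {Ω : Type*} [MeasurableSpace Ω] (μ : Measure Ω) [IsFiniteMeasure μ]
    (f m s : Ω → ℝ) (hfm : Measurable f) (hmm : Measurable m) (hsm : Measurable s)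
    (hs : ∀ x, 0 ≤ s x) (β : ℝ) (hβ : 0 ≤ β) (t : ℝ) (ht : 1 ≤ t)
    (hconf : ∀ x, |f x - m x| ≤ Real.sqrt β * s x + 1 / t ^ 2)
    (α : Ω → ℝ) (hα : ∀ x, α x = m x + Real.sqrt β * s x)
    {Θ : Type*} (p : Θ → Ω → ℝ)
    (hpnn : ∀ θ x, 0 ≤ p θ x) (hpsum : ∀ θ, ∫ x, p θ x ∂μ = 1)
    (hfint : ∀ θ, Integrable (fun x => f x * p θ x) μ)
    (hmint : ∀ θ, Integrable (fun x => m x * p θ x) μ)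
    (hsint : ∀ θ, Integrable (fun x => s x * p θ x) μ)
    (θstar θt : Θ)
    (hθstar : ∀ θ, ∫ x, f x * p θ x ∂μ ≤ ∫ x, f x * p θstar x ∂μ)
    (hθt : ∀ θ, ∫ x, α x * p θ x ∂μ ≤ ∫ x, α x * p θt x ∂μ) :
    (∫ x, f x * p θstar x ∂μ) - (∫ x, f x * p θt x ∂μ)
      ≤ 2 / t ^ 2 + ∫ x, 2 * Real.sqrt β * s x * p θt x ∂μ := by
  -- A non-integrable function would have integral `0`, not `1`.
  have hpint : ∀ θ, Integrable (p θ) μ := fun θ => by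
    by_contra h
    simpa [integral_undef h] using hpsum θ
  have hαint : ∀ θ, Integrable (fun x => α x * p θ x) μ := fun θ => by
    refine ((hmint θ).add ((hsint θ).const_mul (Real.sqrt β))).congr (.of_forall fun x => ?_)
    simp only [Pi.add_apply, hα]
    ring
  have hcint : ∀ θ, Integrable (fun x => 1 / t ^ 2 * p θ x) μ := fun θ => (hpint θ).const_mul _
  have hc : ∀ θ, ∫ x, 1 / t ^ 2 * p θ x ∂μ = 1 / t ^ 2 := fun θ => by
    rw [integral_const_mul, hpsum, mul_one]
  have hwint : Integrable (fun x => 2 * Real.sqrt β * s x * p θt x) μ := by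
    simpa only [mul_assoc] using (hsint θt).const_mul (2 * Real.sqrt β)
  -- Optimism at `θstar`: `f ≤ α + 1 / t ^ 2` pointwise.
  have hupper : ∫ x, f x * p θstar x ∂μ ≤ (∫ x, α x * p θstar x ∂μ) + 1 / t ^ 2 := by
    rw [← hc θstar, ← integral_add (hαint θstar) (hcint θstar)]
    refine integral_mono (hfint θstar) ((hαint θstar).add (hcint θstar)) fun x => ?_
    have h : f x ≤ α x + 1 / t ^ 2 := by
      have := (abs_le.mp (hconf x)).2
      rw [hα]
      linarith
    have := mul_le_mul_of_nonneg_right h (hpnn θstar x)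
    simpa only [Pi.add_apply, add_mul] using this
  -- Confidence width at `θt`: `α ≤ f + 2 * √β * s + 1 / t ^ 2` pointwise.
  have hlower : ∫ x, α x * p θt x ∂μ ≤
      (∫ x, f x * p θt x ∂μ) + (∫ x, 2 * Real.sqrt β * s x * p θt x ∂μ) + 1 / t ^ 2 := by
    have hfw : Integrable (fun x => f x * p θt x + 2 * Real.sqrt β * s x * p θt x) μ :=
      (hfint θt).add hwint
    rw [← hc θt, ← integral_add (hfint θt) hwint, ← integral_add hfw (hcint θt)]
    refine integral_mono (hαint θt) (hfw.add (hcint θt)) fun x => ?_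
    have h : α x ≤ f x + 2 * Real.sqrt β * s x + 1 / t ^ 2 := by
      have := (abs_le.mp (hconf x)).1
      rw [hα]
      linarith
    have := mul_le_mul_of_nonneg_right h (hpnn θt x)
    simpa only [Pi.add_apply, add_mul] using this
  have htwo : 2 / t ^ 2 = 1 / t ^ 2 + 1 / t ^ 2 := by ring
  linarith [hθt θstar]
end

section
/- Let Ω be a measure space with measure μ of total mass V < ∞, σ > 0, C₁ = 8/log(1 + σ⁻²), and T ≥ 1. Let (β_t)_{1≤t≤T} be nondecreasing nonnegative reals. For each t let s_t : Ω → ℝ be measurable with 0 ≤ s_t(x)² ≤ 1, and let p_t be a probability density with respect to μ with p_t ≤ π* almost everywhere. Let γ_T ≥ 0 satisfy ∑_{t=1}^T (1/2)·log(1 + σ⁻²·s_t(x)²) ≤ γ_T for μ-almost every x. Let (r_t)_{1≤t≤T} be reals with 0 ≤ r_t ≤ 2/t² + ∫ 2·β_t^{1/2}·s_t·p_t dμ for each t. Then ∑_{t=1}^T r_t ≤ √(T·β_T·γ_T·C₁·V·π*) + π²/3. -/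
/-!
Write `a t = ∫ s t * p t` and `L = log (1 + σ⁻²)`. The terms `2 / t²` sum to at most `π² / 3` by the
Basel series. For the rest, Jensen's inequality for the probability density `p t` together with
`p t ≤ π*` gives `a t ² ≤ π* ∫ (s t)²` (`sq_integral_mul_density_le`), and concavity of the
logarithm gives `u * L ≤ log (1 + σ⁻² u)` on `[0, 1]` (`mul_log_one_add_le`), so that the
information-gain hypothesis yields `∑ (s t)² ≤ 2 γ / L` almost everywhere. Integrating over a space
of mass `V` bounds `∑ (a t)²` by `2 π* V γ / L`, and Cauchy–Schwarz over the `T` rounds, with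
`β t ≤ β T`, concludes.
-/

open MeasureTheory

/-- The chord of the concave function `u ↦ log (1 + c * u)` on `[0, 1]` lies below its graph. -/
lemma mul_log_one_add_le_s12 {c u : ℝ} (hc : 0 ≤ c) (hu0 : 0 ≤ u) (hu1 : u ≤ 1) :
    u * Real.log (1 + c) ≤ Real.log (1 + c * u) := by
  have h1 : (0 : ℝ) < 1 + c := by linarith
  -- Bernoulli's inequality for an exponent in `[0, 1]`, after taking logarithms.
  rw [← Real.log_rpow h1]
  apply Real.log_le_log (Real.rpow_pos_of_pos h1 _)
  have := rpow_one_add_le_one_add_mul_self (s := c) (by linarith) hu0 hu1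
  linarith [mul_comm c u]

lemma integrable_sq_of_sq_le_one {Ω : Type*} [MeasurableSpace Ω] {μ : Measure Ω}
    [IsFiniteMeasure μ] {f : Ω → ℝ} (hfm : Measurable f) (hf : ∀ x, f x ^ 2 ≤ 1) :
    Integrable (fun x => f x ^ 2) μ := by
  refine Integrable.of_bound (hfm.pow_const 2).aestronglyMeasurable 1 (ae_of_all _ fun x => ?_)
  rw [Real.norm_eq_abs, abs_of_nonneg (sq_nonneg _)]
  exact hf x

/-- Jensen's inequality for the square under a probability density `q`, followed by `q ≤ M`. -/
lemma sq_integral_mul_density_le {Ω : Type*} [MeasurableSpace Ω] {μ : Measure Ω}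
    [IsFiniteMeasure μ] {f q : Ω → ℝ} {M : ℝ} (hfm : Measurable f) (hf : ∀ x, f x ^ 2 ≤ 1)
    (hq0 : ∀ x, 0 ≤ q x) (hq1 : ∫ x, q x ∂μ = 1) (hqM : ∀ᵐ x ∂μ, q x ≤ M) :
    (∫ x, f x * q x ∂μ) ^ 2 ≤ M * ∫ x, f x ^ 2 ∂μ := by
  -- A non-integrable function would have integral `0`.
  have hqi : Integrable q μ := by
    by_contra h
    rw [integral_undef h] at hq1
    exact zero_ne_one hq1
  have hfq : Integrable (fun x => f x * q x) μ := by
    refine hqi.bdd_mul (c := 1) hfm.aestronglyMeasurable (ae_of_all _ fun x => ?_)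
    rw [Real.norm_eq_abs]
    exact (sq_le_one_iff_abs_le_one _).1 (hf x)
  have hf2q : Integrable (fun x => f x ^ 2 * q x) μ := by
    refine hqi.bdd_mul (c := 1) (hfm.pow_const 2).aestronglyMeasurable (ae_of_all _ fun x => ?_)
    rw [Real.norm_eq_abs, abs_of_nonneg (sq_nonneg _)]
    exact hf x
  set a := ∫ x, f x * q x ∂μ with ha
  -- Nonnegativity of the variance `∫ (f - a)² q`, expanded.
  have hvar : 0 ≤ ∫ x, (f x ^ 2 * q x - 2 * a * (f x * q x) + a ^ 2 * q x) ∂μ := by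
    refine integral_nonneg fun x => ?_
    have := mul_nonneg (sq_nonneg (f x - a)) (hq0 x)
    simp only [Pi.zero_apply]
    linarith [this, show (f x - a) ^ 2 * q x
      = f x ^ 2 * q x - 2 * a * (f x * q x) + a ^ 2 * q x by ring]
  have hdiff : Integrable (fun x => f x ^ 2 * q x - 2 * a * (f x * q x)) μ :=
    hf2q.sub (hfq.const_mul _)
  rw [integral_add hdiff (hqi.const_mul _),
    integral_sub hf2q (hfq.const_mul _), integral_const_mul, integral_const_mul, hq1,
    ← ha] at hvar
  have hle : ∫ x, f x ^ 2 * q x ∂μ ≤ ∫ x, M * f x ^ 2 ∂μ := by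
    refine integral_mono_ae hf2q ((integrable_sq_of_sq_le_one hfm hf).const_mul M) ?_
    filter_upwards [hqM] with x hx
    nlinarith [mul_le_mul_of_nonneg_left hx (sq_nonneg (f x))]
  rw [integral_const_mul] at hle
  nlinarith

lemma sum_two_div_sq_le (T : ℕ) :
    ∑ t ∈ Finset.Icc 1 T, 2 / (t : ℝ) ^ 2 ≤ Real.pi ^ 2 / 3 := by
  have h := sum_le_hasSum (Finset.Icc 1 T) (fun n _ => by positivity) hasSum_zeta_two
  have h2 : ∑ t ∈ Finset.Icc 1 T, 2 / (t : ℝ) ^ 2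
      = 2 * ∑ t ∈ Finset.Icc 1 T, 1 / (t : ℝ) ^ 2 := by
    rw [Finset.mul_sum]
    exact Finset.sum_congr rfl fun t _ => by ring
  rw [h2]
  linarith

/-- Cumulative expected regret bound in the continuous SS-GPUCB theorem:
`∑_{t=1}^T r_t ≤ √(T·β_T·γ_T·C₁·V·π*) + π²/3`. -/
theorem stmt_12 {Ω : Type*} [MeasurableSpace Ω] (μ : Measure Ω) [IsFiniteMeasure μ]
    (V : ℝ) (hV : V = (μ Set.univ).toReal)
    (σ : ℝ) (hσ : 0 < σ) (C₁ : ℝ) (hC₁ : C₁ = 8 / Real.log (1 + σ⁻¹ ^ 2))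
    (T : ℕ) (hT : 1 ≤ T) (β : ℕ → ℝ)
    (hβnn : ∀ t ∈ Finset.Icc 1 T, 0 ≤ β t)
    (hβmono : ∀ t ∈ Finset.Icc 1 T, ∀ t' ∈ Finset.Icc 1 T, t ≤ t' → β t ≤ β t')
    (s : ℕ → Ω → ℝ) (hsm : ∀ t ∈ Finset.Icc 1 T, Measurable (s t))
    (hs : ∀ t ∈ Finset.Icc 1 T, ∀ x, 0 ≤ (s t x) ^ 2 ∧ (s t x) ^ 2 ≤ 1)
    (p : ℕ → Ω → ℝ) (πstar : ℝ)
    (hpm : ∀ t ∈ Finset.Icc 1 T, Measurable (p t))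
    (hpnn : ∀ t ∈ Finset.Icc 1 T, ∀ x, 0 ≤ p t x)
    (hpsum : ∀ t ∈ Finset.Icc 1 T, ∫ x, p t x ∂μ = 1)
    (hpbd : ∀ t ∈ Finset.Icc 1 T, ∀ᵐ x ∂μ, p t x ≤ πstar)
    (γT : ℝ) (hγnn : 0 ≤ γT)
    (hγ : ∀ᵐ x ∂μ, ∑ t ∈ Finset.Icc 1 T,
      (1 / 2 : ℝ) * Real.log (1 + σ⁻¹ ^ 2 * (s t x) ^ 2) ≤ γT)
    (r : ℕ → ℝ)
    (hrnn : ∀ t ∈ Finset.Icc 1 T, 0 ≤ r t)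
    (hr : ∀ t ∈ Finset.Icc 1 T,
      r t ≤ 2 / (t : ℝ) ^ 2 + ∫ x, 2 * Real.sqrt (β t) * s t x * p t x ∂μ) :
    ∑ t ∈ Finset.Icc 1 T, r t
      ≤ Real.sqrt (T * β T * γT * C₁ * V * πstar) + Real.pi ^ 2 / 3 := by
  have hTmem : T ∈ Finset.Icc 1 T := Finset.mem_Icc.2 ⟨hT, le_rfl⟩
  have hL : 0 < Real.log (1 + σ⁻¹ ^ 2) := Real.log_pos (by
    have : 0 < σ⁻¹ ^ 2 := by positivity
    linarith)
  set L := Real.log (1 + σ⁻¹ ^ 2) with hLdef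
  -- `μ ≠ 0` because it carries a probability density, so `0 ≤ p T x ≤ π*` holds at some point.
  have hμ : μ ≠ 0 := by
    rintro rfl
    simpa using hpsum T hTmem
  have hπ : 0 ≤ πstar := by
    have : NeZero μ := ⟨hμ⟩
    obtain ⟨x, hx⟩ := (hpbd T hTmem).exists
    exact (hpnn T hTmem x).trans hx
  have hsum_sq : ∀ᵐ x ∂μ, ∑ t ∈ Finset.Icc 1 T, s t x ^ 2 ≤ 2 * γT / L := by
    filter_upwards [hγ] with x hx
    rw [le_div_iff₀ hL, Finset.sum_mul]
    have h : ∑ t ∈ Finset.Icc 1 T, s t x ^ 2 * L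
        ≤ ∑ t ∈ Finset.Icc 1 T, Real.log (1 + σ⁻¹ ^ 2 * s t x ^ 2) :=
      Finset.sum_le_sum fun t ht =>
        mul_log_one_add_le_s12 (sq_nonneg _) (hs t ht x).1 (hs t ht x).2
    rw [← Finset.mul_sum] at hx
    linarith
  have hint : ∀ t ∈ Finset.Icc 1 T, Integrable (fun x => s t x ^ 2) μ := fun t ht =>
    integrable_sq_of_sq_le_one (hsm t ht) fun x => (hs t ht x).2
  have hint_sum : ∑ t ∈ Finset.Icc 1 T, ∫ x, s t x ^ 2 ∂μ ≤ 2 * γT / L * V := by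
    rw [← integral_finsetSum _ hint]
    calc ∫ x, ∑ t ∈ Finset.Icc 1 T, s t x ^ 2 ∂μ ≤ ∫ _, 2 * γT / L ∂μ :=
          integral_mono_ae (integrable_finsetSum _ hint) (integrable_const _) hsum_sq
      _ = 2 * γT / L * V := by
          rw [integral_const, hV, smul_eq_mul, mul_comm, measureReal_def]
  set a : ℕ → ℝ := fun t => ∫ x, s t x * p t x ∂μ with ha
  have hI : ∀ t, ∫ x, 2 * Real.sqrt (β t) * s t x * p t x ∂μ = 2 * Real.sqrt (β t) * a t := by
    intro t
    simp only [ha]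
    rw [← integral_const_mul]
    exact integral_congr_ae (ae_of_all _ fun x => by ring)
  have hsq : ∀ t ∈ Finset.Icc 1 T,
      (2 * Real.sqrt (β t) * a t) ^ 2 ≤ 4 * β T * πstar * ∫ x, s t x ^ 2 ∂μ := by
    intro t ht
    have h1 : a t ^ 2 ≤ πstar * ∫ x, s t x ^ 2 ∂μ :=
      sq_integral_mul_density_le (hsm t ht) (fun x => (hs t ht x).2) (hpnn t ht) (hpsum t ht)
        (hpbd t ht)
    have h2 := hβmono t ht T hTmem (Finset.mem_Icc.1 ht).2
    have h3 := mul_le_mul h2 h1 (sq_nonneg _) (hβnn T hTmem)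
    calc (2 * Real.sqrt (β t) * a t) ^ 2 = 4 * (β t * a t ^ 2) := by
          rw [mul_pow, mul_pow, Real.sq_sqrt (hβnn t ht)]
          ring
      _ ≤ _ := by linarith
  have hmain : ∑ t ∈ Finset.Icc 1 T, 2 * Real.sqrt (β t) * a t
      ≤ Real.sqrt (T * β T * γT * C₁ * V * πstar) := by
    apply Real.le_sqrt_of_sq_le
    have hβT := hβnn T hTmem
    calc (∑ t ∈ Finset.Icc 1 T, 2 * Real.sqrt (β t) * a t) ^ 2
        ≤ T * ∑ t ∈ Finset.Icc 1 T, (2 * Real.sqrt (β t) * a t) ^ 2 := by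
          simpa using sq_sum_le_card_mul_sum_sq (s := Finset.Icc 1 T)
            (f := fun t => 2 * Real.sqrt (β t) * a t)
      _ ≤ T * (4 * β T * πstar * (2 * γT / L * V)) := by
          refine mul_le_mul_of_nonneg_left ?_ (Nat.cast_nonneg _)
          refine (Finset.sum_le_sum hsq).trans ?_
          rw [← Finset.mul_sum]
          exact mul_le_mul_of_nonneg_left hint_sum (by positivity)
      _ = T * β T * γT * C₁ * V * πstar := by
          rw [hC₁]
          ring
  calc ∑ t ∈ Finset.Icc 1 T, r t
      ≤ ∑ t ∈ Finset.Icc 1 T, (2 / (t : ℝ) ^ 2 + 2 * Real.sqrt (β t) * a t) :=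
        Finset.sum_le_sum fun t ht => (hr t ht).trans_eq (by rw [hI])
    _ ≤ _ := by
        rw [Finset.sum_add_distrib]
        linarith [sum_two_div_sq_le T]
end
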